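/- Let n ≥ 2, let 𝓔 ⊂ 𝓛ⁿ contain all convex bodies (𝒦ⁿₙ ⊂ 𝓔), let ∂ : 𝓔 → 𝓛ⁿ be monotonic, measure preserving, and map balls to balls, and let ψ_{∂,r} : ℝⁿ → ℝⁿ (r > 0) be the associated contractions with ∂B(x,r) = B(ψ_{∂,r}(x), r) essentially. Let H = u⊥ + t₀u (u a unit vector, t₀ ∈ ℝ) be a hyperplane. If there is an r₀ > 0 such that the restriction of ψ_{∂,r₀} to H is the identity on H, then the restriction of ∂ to 𝒦ⁿₙ respects H-cylinders, and consequently ψ_{∂,r} is independent of r > 0. -/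

import Mathlib

open MeasureTheory Metric Filter Topology
open scoped RealInnerProductSpace

noncomputable section

abbrev Euc (n : ℕ) : Type := EuclideanSpace ℝ (Fin n)

/-- `A` is essentially contained in `B` (up to a set of measure zero). -/
def essSub {n : ℕ} (A B : Set (Euc n)) : Prop := volume (A \ B) = 0

/-- `A` is essentially equal to `B` (up to a set of measure zero). -/
def essEq {n : ℕ} (A B : Set (Euc n)) : Prop := volume ((A \ B) ∪ (B \ A)) = 0

/-- A convex body: a compact convex set with nonempty interior. -/
def isConvexBody {n : ℕ} (A : Set (Euc n)) : Prop :=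
  IsCompact A ∧ Convex ℝ A ∧ (interior A).Nonempty

/-- The infinite spherical cylinder of radius `ρ` whose axis passes through `c`
in direction `u`. -/
def cyl {n : ℕ} (u c : Euc n) (ρ : ℝ) : Set (Euc n) :=
  {y | ‖(y - c) - ⟪y - c, u⟫ • u‖ ≤ ρ}

theorem aux_convex_sub {n : ℕ} {A C : Set (Euc n)} (hA : isConvexBody A) (hC : IsClosed C)
    (h : essSub A C) : A ⊆ C := by
  obtain ⟨hc, hcv, hne⟩ := hA
  have h1 : interior A ⊆ C := by
    intro x hx
    by_contra hxC
    have ho : IsOpen (interior A ∩ Cᶜ) := isOpen_interior.inter hC.isOpen_compl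
    have h0 : volume (interior A ∩ Cᶜ) = 0 :=
      measure_mono_null (t := A \ C) (fun y hy => ⟨interior_subset hy.1, hy.2⟩) h
    have := ho.measure_pos volume ⟨x, hx, hxC⟩
    rw [h0] at this
    exact lt_irrefl _ this
  have h2 := hcv.closure_interior_eq_closure_of_nonempty_interior hne
  calc A ⊆ closure A := subset_closure
    _ = closure (interior A) := h2.symm
    _ ⊆ C := closure_minimal h1 hC

theorem aux_ball_body {n : ℕ} (x : Euc n) {r : ℝ} (hr : 0 < r) :
    isConvexBody (closedBall x r) :=
  ⟨isCompact_closedBall x r, convex_closedBall x r,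
    ⟨x, ball_subset_interior_closedBall (mem_ball_self hr)⟩⟩

theorem aux_ball_le {n : ℕ} {u : Euc n} (hu : ‖u‖ = 1) {a b : Euc n} {r s : ℝ} (hr : 0 < r)
    (h : closedBall a r ⊆ closedBall b s) : ‖a - b‖ ≤ s - r := by
  by_cases hab : a - b = 0
  · have h1 : a + r • u ∈ closedBall a r := by
      simp [norm_smul, hu, abs_of_pos hr]
    have h2 := h h1
    have : a + r • u - b = r • u := by rw [add_sub_right_comm, hab, zero_add]
    rw [mem_closedBall, dist_eq_norm, this, norm_smul, hu, Real.norm_eq_abs, abs_of_pos hr] at h2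
    rw [hab, norm_zero]; linarith
  · have hp : 0 < ‖a - b‖ := norm_pos_iff.mpr hab
    have h1 : a + (r / ‖a - b‖) • (a - b) ∈ closedBall a r := by
      rw [mem_closedBall, dist_eq_norm, add_sub_cancel_left, norm_smul, Real.norm_eq_abs,
        abs_of_pos (by positivity)]
      field_simp
      exact le_refl _
    have h2 := h h1
    have : a + (r / ‖a - b‖) • (a - b) - b = (1 + r / ‖a - b‖) • (a - b) := by module
    rw [mem_closedBall, dist_eq_norm, this, norm_smul, Real.norm_eq_abs,
        abs_of_pos (by positivity)] at h2
    field_simp at h2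
    linarith

theorem aux_two_balls {E : Type*} [NormedAddCommGroup E] [InnerProductSpace ℝ E]
    {p w : E} (h1 : ‖p - w‖ ≤ ‖w‖) (h2 : ‖p + w‖ ≤ ‖w‖) : p = 0 := by
  have := parallelogram_law_with_norm ℝ p w
  have h3 := norm_nonneg (p - w)
  have h4 := norm_nonneg (p + w)
  have : ‖p‖ = 0 := by nlinarith [norm_nonneg p]
  exact norm_eq_zero.mp this

theorem aux_perp {n : ℕ} (hn : 2 ≤ n) (u : Euc n) : ∃ v : Euc n, ‖v‖ = 1 ∧ ⟪v, u⟫ = 0 := by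
  have h1 : (ℝ ∙ u)ᗮ ≠ ⊥ := by
    intro h
    have h2 := Submodule.finrank_add_finrank_orthogonal (ℝ ∙ u)
    rw [h, finrank_bot, finrank_euclideanSpace_fin] at h2
    have h3 := finrank_span_le_card (R := ℝ) ({u} : Set (Euc n))
    simp at h3
    omega
  obtain ⟨w, hw, hw0⟩ := Submodule.exists_mem_ne_zero_of_ne_bot h1
  refine ⟨(‖w‖⁻¹ : ℝ) • w, ?_, ?_⟩
  · exact norm_smul_inv_norm (𝕜 := ℝ) hw0
  · rw [real_inner_smul_left, Submodule.mem_orthogonal_singleton_iff_inner_left.mp hw, mul_zero]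

theorem aux_sep {n : ℕ} {u : Euc n} (hu : ‖u‖ = 1) (t₀ : ℝ) {A : Set (Euc n)}
    (hA : IsCompact A) {c : Euc n} {ρ : ℝ} (hρ : 0 < ρ) (hAc : A ⊆ cyl u c ρ) {y : Euc n}
    (hy : y ∉ cyl u c ρ) :
    ∃ (x : Euc n) (R : ℝ), 0 < R ∧ ⟪x, u⟫ = t₀ ∧ A ⊆ closedBall x R ∧ y ∉ closedBall x R := by
  have huu : ⟪u, u⟫ = 1 := by rw [real_inner_self_eq_norm_sq, hu]; norm_num
  simp only [cyl, Set.mem_ofPred_eq, not_le] at hy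
  set w := (y - c) - ⟪y - c, u⟫ • u with hw
  have hwp : 0 < ‖w‖ := hρ.trans hy
  have hwu : ⟪w, u⟫ = 0 := by
    rw [hw, inner_sub_left, real_inner_smul_left, huu]; ring
  set v := (‖w‖⁻¹ : ℝ) • w with hv
  have hv1 : ‖v‖ = 1 := norm_smul_inv_norm (𝕜 := ℝ) (norm_pos_iff.mp hwp)
  have hvu : ⟪v, u⟫ = 0 := by rw [hv, real_inner_smul_left, hwu, mul_zero]
  have huv : ⟪u, v⟫ = 0 := by rw [real_inner_comm]; exact hvu
  have hwv : ⟪w, v⟫ = ‖w‖ := by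
    rw [hv, real_inner_smul_right, real_inner_self_eq_norm_sq]; field_simp
  set c0 := c + (t₀ - ⟪c, u⟫) • u with hc0
  have key : ∀ a : Euc n, ⟪a - c0, v⟫ = ⟪(a - c) - ⟪a - c, u⟫ • u, v⟫ := by
    intro a
    rw [hc0]
    simp only [inner_sub_left, inner_add_left, real_inner_smul_left, huv]
    ring
  obtain ⟨M, hM⟩ := (hA.isBounded.subset_closedBall c0)
  obtain ⟨ε, hε, hε2⟩ : ∃ ε : ℝ, 0 < ε ∧ ‖w‖ = ρ + 2 * ε :=
    ⟨(‖w‖ - ρ) / 2, by linarith, by ring⟩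
  set K := M ^ 2 / (2 * ε) with hK
  have hKn : 0 ≤ K := by positivity
  have hKM : 2 * K * ε = M ^ 2 := by rw [hK]; field_simp
  refine ⟨c0 - K • v, K + ρ + ε, by positivity, ?_, ?_, ?_⟩
  · rw [hc0]
    simp only [inner_sub_left, inner_add_left, real_inner_smul_left, huu, hvu]
    ring
  · intro a ha
    have h1 := hM ha
    rw [mem_closedBall, dist_eq_norm] at h1 ⊢
    have h2 : ⟪a - c0, v⟫ ≤ ρ := by
      rw [key]
      calc _ ≤ _ := real_inner_le_norm _ _
        _ ≤ ρ := by rw [hv1, mul_one]; exact hAc ha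
    have h3 : ‖a - (c0 - K • v)‖ ^ 2 = ‖a - c0‖ ^ 2 + 2 * (K * ⟪a - c0, v⟫) + K ^ 2 := by
      have : a - (c0 - K • v) = (a - c0) + K • v := by module
      rw [this, norm_add_sq_real, real_inner_smul_right, norm_smul, hv1, mul_one,
        Real.norm_eq_abs, sq_abs]
    apply le_of_sq_le_sq _ (by positivity)
    rw [h3]
    have h4 := mul_le_mul_of_nonneg_left h2 hKn
    have h5 : ‖a - c0‖ ^ 2 ≤ M ^ 2 := by gcongr
    nlinarith [sq_nonneg (ρ + ε)]
  · rw [mem_closedBall, dist_eq_norm, not_le]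
    have h1 : ⟪y - (c0 - K • v), v⟫ = ‖w‖ + K := by
      have : y - (c0 - K • v) = (y - c0) + K • v := by module
      rw [this, inner_add_left, key, ← hw, hwv, real_inner_smul_left, real_inner_self_eq_norm_sq,
        hv1]
      ring
    have h2 := real_inner_le_norm (y - (c0 - K • v)) v
    rw [h1, hv1, mul_one] at h2
    linarith

theorem aux_cyl_closed {n : ℕ} (u c : Euc n) (ρ : ℝ) : IsClosed (cyl u c ρ) :=
  isClosed_le (by fun_prop) continuous_const

/-- Lemma 4.4(ii): if the contraction `ψ_{∂,r₀}` restricted to the hyperplane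
`H = u⊥ + t₀u` is the identity for some `r₀ > 0`, then `∂` restricted to the
convex bodies respects `H`-cylinders, and `ψ_{∂,r}` is independent of `r > 0`. -/
theorem stmt2 {n : ℕ} (hn : 2 ≤ n)
    (𝓔 : Set (Set (Euc n)))
    (h𝓔meas : ∀ A ∈ 𝓔, MeasurableSet A ∧ volume A ≠ ⊤)
    (hK𝓔 : ∀ A : Set (Euc n), isConvexBody A → A ∈ 𝓔)
    (D : Set (Euc n) → Set (Euc n))
    (hDmeas : ∀ A ∈ 𝓔, MeasurableSet (D A) ∧ volume (D A) ≠ ⊤)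
    (hmono : ∀ A ∈ 𝓔, ∀ B ∈ 𝓔, essSub A B → essSub (D A) (D B))
    (hmeaspres : ∀ A ∈ 𝓔, volume (D A) = volume A)
    (hballs : ∀ A ∈ 𝓔, (∃ (x : Euc n) (r : ℝ), 0 < r ∧ essEq A (closedBall x r)) →
        ∃ (x' : Euc n) (r' : ℝ), 0 < r' ∧ essEq (D A) (closedBall x' r'))
    (ψ : ℝ → Euc n → Euc n)
    (hψlip : ∀ r : ℝ, 0 < r → LipschitzWith 1 (ψ r))
    (hψ : ∀ (x : Euc n) (r : ℝ), 0 < r →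
        essEq (D (closedBall x r)) (closedBall (ψ r x) r))
    (u : Euc n) (hu : ‖u‖ = 1) (t₀ : ℝ)
    (r₀ : ℝ) (hr₀ : 0 < r₀)
    (hid : ∀ x : Euc n, ⟪x, u⟫ = t₀ → ψ r₀ x = x) :
    (∀ A : Set (Euc n), isConvexBody A → ∀ (c : Euc n) (ρ : ℝ), 0 < ρ →
        essSub A (cyl u c ρ) → essSub (D A) (cyl u c ρ)) ∧
    (∀ r r' : ℝ, 0 < r → 0 < r' → ψ r = ψ r') := by
  have huu : ⟪u, u⟫ = 1 := by rw [real_inner_self_eq_norm_sq, hu]; norm_num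
  have hsub : ∀ (x y : Euc n) (r s : ℝ), 0 < r → 0 < s → ‖x - y‖ ≤ s - r →
      ‖ψ r x - ψ s y‖ ≤ s - r := by
    intro x y r s hr hs hxy
    have h0 : closedBall x r ⊆ closedBall y s := closedBall_subset_closedBall' (by
      rw [dist_eq_norm]; linarith)
    have h1 : essSub (closedBall x r) (closedBall y s) := by
      rw [essSub, Set.sdiff_eq_empty.mpr h0, measure_empty]
    have h2 := hmono _ (hK𝓔 _ (aux_ball_body x hr)) _ (hK𝓔 _ (aux_ball_body y hs)) h1
    have h3 := hψ x r hr
    have h4 := hψ y s hs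
    simp only [essEq, measure_union_null_iff] at h3 h4
    apply aux_ball_le hu hr
    apply aux_convex_sub (aux_ball_body _ hr) isClosed_closedBall
    have e1 := ae_le_set.mpr h3.2
    have e2 := ae_le_set.mpr h2
    have e3 := ae_le_set.mpr h4.1
    exact ae_le_set.mp ((e1.trans e2).trans e3)
  obtain ⟨v, hv1, hvu⟩ := aux_perp hn u
  have hH : ∀ r : ℝ, 0 < r → ∀ x : Euc n, ⟪x, u⟫ = t₀ → ψ r x = x := by
    intro r hr x hx
    have hk : ∀ k : ℝ, |k| = |r - r₀| → ‖(ψ r x - x) - k • v‖ ≤ ‖k • v‖ := by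
      intro k hk
      have hy : ⟪x + k • v, u⟫ = t₀ := by
        rw [inner_add_left, real_inner_smul_left, hvu, hx]; ring
      have hny : ‖k • v‖ = |r - r₀| := by rw [norm_smul, hv1, mul_one, Real.norm_eq_abs, hk]
      have e : (ψ r x - x) - k • v = ψ r x - ψ r₀ (x + k • v) := by
        rw [hid _ hy]; abel
      rw [e, hny]
      rcases le_total r r₀ with h | h
      · rw [abs_of_nonpos (by linarith)] at hny ⊢
        have := hsub x (x + k • v) r r₀ hr hr₀ (by
          rw [sub_add_cancel_left, norm_neg, hny]; linarith)
        linarith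
      · rw [abs_of_nonneg (by linarith)] at hny ⊢
        have := hsub (x + k • v) x r₀ r hr₀ hr (by
          rw [add_sub_cancel_left, hny])
        rw [norm_sub_rev]; exact this
    have h1 := hk (r - r₀) rfl
    have h2 := hk (-(r - r₀)) (abs_neg _)
    rw [neg_smul, sub_neg_eq_add, norm_neg] at h2
    exact sub_eq_zero.mp (aux_two_balls h1 h2)
  refine ⟨?_, ?_⟩
  · intro A hA c ρ hρ hAc
    have hAc' := aux_convex_sub hA (aux_cyl_closed u c ρ) hAc
    refine measure_null_of_locally_null _ ?_
    rintro y ⟨-, hy⟩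
    obtain ⟨x, R, hR, hxu, hAx, hyx⟩ := aux_sep hu t₀ hA.1 hρ hAc' hy
    refine ⟨(D A \ cyl u c ρ) ∩ (closedBall x R)ᶜ,
      inter_mem_nhdsWithin _ (isClosed_closedBall.isOpen_compl.mem_nhds hyx), ?_⟩
    have h1 : essSub A (closedBall x R) := by
      rw [essSub, Set.sdiff_eq_empty.mpr hAx, measure_empty]
    have h2 := hmono _ (hK𝓔 _ hA) _ (hK𝓔 _ (aux_ball_body x hR)) h1
    have h3 := hψ x R hR
    rw [hH R hR x hxu] at h3
    simp only [essEq, measure_union_null_iff] at h3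
    have h4 := ae_le_set.mp ((ae_le_set.mpr h2).trans (ae_le_set.mpr h3.1))
    exact measure_mono_null (t := D A \ closedBall x R) (fun z hz => ⟨hz.1.1, hz.2⟩) h4
  · have hline : ∀ r : ℝ, 0 < r → ∀ x : Euc n, ∃ a : ℝ, ψ r x = x + a • u := by
      intro r hr x
      set p := ψ r x - x with hp
      set w := p - ⟪p, u⟫ • u with hw
      have hwu : ⟪w, u⟫ = 0 := by
        rw [hw, inner_sub_left, real_inner_smul_left, huu]; ring
      have hpw : ⟪p, w⟫ = ‖w‖ ^ 2 := by
        have : p = w + ⟪p, u⟫ • u := by rw [hw]; abel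
        rw [this, inner_add_left, real_inner_smul_left, real_inner_comm, real_inner_comm w u,
          real_inner_self_eq_norm_sq, hwu, mul_zero, add_zero]
      set s := ⟪x, u⟫ - t₀ with hs
      have hT : ∀ T : ℝ, ‖p‖ ^ 2 + 2 * (s * ⟪p, u⟫ + T * ‖w‖ ^ 2) ≤ 0 := by
        intro T
        have hz : ⟪x - (s • u + T • w), u⟫ = t₀ := by
          rw [inner_sub_left, inner_add_left, real_inner_smul_left, real_inner_smul_left, huu, hwu,
            hs]
          ring
        have h1 := (hψlip r hr).dist_le_mul x (x - (s • u + T • w))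
        rw [hH r hr _ hz, dist_eq_norm, dist_eq_norm, NNReal.coe_one, one_mul, sub_sub_cancel] at h1
        have e : ψ r x - (x - (s • u + T • w)) = p + (s • u + T • w) := by rw [hp]; abel
        rw [e] at h1
        have h2 := pow_le_pow_left₀ (norm_nonneg _) h1 2
        rw [norm_add_sq_real, inner_add_right, real_inner_smul_right, real_inner_smul_right,
          hpw] at h2
        linarith
      have hw0 : ‖w‖ ^ 2 = 0 := by
        by_contra hne
        have h1 := hT ((1 - ‖p‖ ^ 2 / 2 - s * ⟪p, u⟫) / ‖w‖ ^ 2)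
        rw [div_mul_cancel₀ _ hne] at h1
        linarith
      have hw00 : w = 0 := by simpa using hw0
      refine ⟨⟪p, u⟫, ?_⟩
      have : p = ⟪p, u⟫ • u := sub_eq_zero.mp hw00
      rw [← this, hp]; abel
    have hab : ∀ (a b k : ℝ), ‖(a - b) • u + k • v‖ ≤ |k| → a = b := by
      intro a b k h
      have h2 := pow_le_pow_left₀ (norm_nonneg _) h 2
      rw [norm_add_sq_real, real_inner_smul_left, real_inner_smul_right, real_inner_comm, hvu,
        norm_smul, norm_smul, hu, hv1, sq_abs, mul_one, mul_one, Real.norm_eq_abs,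
        Real.norm_eq_abs, sq_abs, sq_abs] at h2
      have : (a - b) ^ 2 = 0 := by nlinarith [sq_nonneg (a - b)]
      have := pow_eq_zero_iff (two_ne_zero) |>.mp this
      linarith
    have hlt : ∀ r s : ℝ, 0 < r → 0 < s → r ≤ s → ψ r = ψ s := by
      intro r s hr hs hrs
      funext x
      have hny : ‖(s - r) • v‖ = s - r := by
        rw [norm_smul, hv1, mul_one, Real.norm_eq_abs, abs_of_nonneg (by linarith)]
      obtain ⟨a, ha⟩ := hline r hr x
      obtain ⟨b, hb⟩ := hline s hs (x + (s - r) • v)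
      obtain ⟨d, hd⟩ := hline s hs x
      have h1 := hsub x (x + (s - r) • v) r s hr hs (by
        rw [sub_add_cancel_left, norm_neg, hny])
      have h2 := (hψlip s hs).dist_le_mul (x + (s - r) • v) x
      rw [dist_eq_norm, dist_eq_norm, NNReal.coe_one, one_mul, add_sub_cancel_left, hny, hb, hd] at h2
      rw [ha, hb] at h1
      have e1 : a = b := hab a b (-(s - r)) (by
        rw [abs_neg, abs_of_nonneg (by linarith)]
        have e : (a - b) • u + (-(s - r)) • v = x + a • u - (x + (s - r) • v + b • u) := by module
        rw [e]; exact h1)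
      have e2 : b = d := hab b d (s - r) (by
        rw [abs_of_nonneg (by linarith)]
        have e : (b - d) • u + (s - r) • v = x + (s - r) • v + b • u - (x + d • u) := by module
        rw [e]; exact h2)
      rw [ha, hd, e1, e2]
    intro r s hr hs
    rcases le_total r s with h | h
    · exact hlt r s hr hs h
    · exact (hlt s r hs hr h).symm
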